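/- Let D ⊂ ℝ^d be a bounded Lipschitz domain. For every f ∈ C^1(D̄) and every ε > 0, there exists a shallow ReLU neural network ψ: ℝ^d → ℝ of the form ψ(x) = Σ_{j=1}^N a_j σ(w_j·x + b_j), with a_j, b_j ∈ ℝ and w_j ∈ ℝ^d, such that ‖ψ − f‖_{W^{1,∞}(D)} ≤ ε. -/

import Mathlib

open MeasureTheory ENNReal
open scoped RealInnerProductSpace

noncomputable section

/-- The ReLU activation function. -/
def relu (x : ℝ) : ℝ := max x 0

/-!
On an interval, a step function close to the derivative of `g` integrates to a piecewise linear
function close to `g` in `W^{1,∞}`, and that function is a shallow ReLU network. Composing with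
`x ↦ ⟪w, x⟫` shows that every `C¹` ridge function is a `W^{1,∞}` limit of networks on bounded sets,
in particular the exponentials `exp ⟪w, x⟫`.

The span of these exponentials is an algebra separating points, so by Stone–Weierstrass it contains
`T` uniformly close, on a large ball, to a mollifier `φ`. Then `T ⋆ g` is close to `φ ⋆ g`, hence to
`g`, and `∇(T ⋆ g) = T ⋆ ∇g` is close to `∇g`. Since `exp ⟪w, x - y⟫` factorises, `T ⋆ g` is again a
combination of exponentials. A cutoff makes the given function compactly supported.
-/

open Filter Set Topology

section W1Inf

variable {E F G : Type*} [NormedAddCommGroup E] [NormedSpace ℝ E] [MeasurableSpace E]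
  [NormedAddCommGroup F] [NormedSpace ℝ F] [NormedAddCommGroup G] [NormedSpace ℝ G]
  {μ : Measure E} {u v : E → F} {ε δ : ℝ}

/-- Both terms of the norm `‖u‖_{W^{1,∞}(μ)} = ‖u‖_{L^∞} + ‖∇u‖_{L^∞}` are at most `ε`.
Differentiability is demanded because `fderiv` is `0` at points where it fails. -/
def W1InfBound (μ : Measure E) (u : E → F) (ε : ℝ) : Prop :=
  ∀ᵐ x ∂μ, ‖u x‖ ≤ ε ∧ DifferentiableAt ℝ u x ∧ ‖fderiv ℝ u x‖ ≤ ε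

namespace W1InfBound

lemma zero (hε : 0 ≤ ε) : W1InfBound μ (0 : E → F) ε :=
  ae_of_all _ fun x => ⟨by simpa, differentiableAt_const 0, by simpa⟩

lemma mono (hu : W1InfBound μ u ε) (hεδ : ε ≤ δ) : W1InfBound μ u δ := by
  filter_upwards [hu] with x ⟨hux, hdiff, hderiv⟩
  exact ⟨hux.trans hεδ, hdiff, hderiv.trans hεδ⟩

lemma add (hu : W1InfBound μ u ε) (hv : W1InfBound μ v δ) : W1InfBound μ (u + v) (ε + δ) := by
  filter_upwards [hu, hv] with x ⟨hux, hu_diff, hu_deriv⟩ ⟨hvx, hv_diff, hv_deriv⟩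
  refine ⟨norm_add_le_of_le hux hvx, hu_diff.add hv_diff, ?_⟩
  rw [fderiv_add hu_diff hv_diff]
  exact norm_add_le_of_le hu_deriv hv_deriv

lemma const_smul (hu : W1InfBound μ u ε) (c : ℝ) : W1InfBound μ (c • u) (|c| * ε) := by
  filter_upwards [hu] with x ⟨hux, hdiff, hderiv⟩
  refine ⟨?_, hdiff.const_smul c, ?_⟩
  · rw [Pi.smul_apply, norm_smul, Real.norm_eq_abs]
    gcongr
  · rw [fderiv_const_smul hdiff, norm_smul, Real.norm_eq_abs]
    gcongr

lemma congr (hu : W1InfBound μ u ε) (huv : ∀ᵐ x ∂μ, u =ᶠ[𝓝 x] v) : W1InfBound μ v ε := by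
  filter_upwards [hu, huv] with x ⟨hux, hdiff, hderiv⟩ hx
  rw [← hx.eq_of_nhds, ← hx.fderiv_eq]
  exact ⟨hux, hdiff.congr_of_eventuallyEq hx.symm, hderiv⟩

lemma comp_clm [MeasurableSpace G] {ν : Measure G} {u : G → F} (hu : W1InfBound ν u ε)
    {L : E →L[ℝ] G} (hL : Measure.QuasiMeasurePreserving L μ ν) :
    W1InfBound μ (u ∘ L) (max 1 ‖L‖ * ε) := by
  filter_upwards [hL.ae hu] with x ⟨hux, hdiff, hderiv⟩
  have hε : 0 ≤ ε := (norm_nonneg _).trans hux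
  refine ⟨hux.trans (le_mul_of_one_le_left hε (le_max_left _ _)),
    hdiff.comp x L.differentiableAt, ?_⟩
  rw [fderiv_comp x hdiff L.differentiableAt, L.fderiv]
  calc ‖(fderiv ℝ u (L x)).comp L‖ ≤ ‖fderiv ℝ u (L x)‖ * ‖L‖ :=
        ContinuousLinearMap.opNorm_comp_le _ _
    _ ≤ ε * max 1 ‖L‖ := by gcongr; exact le_max_right _ _
    _ = max 1 ‖L‖ * ε := mul_comm _ _

lemma essSup_add_essSup_le (hu : W1InfBound μ u ε) (hε : 0 ≤ ε) :
    essSup (fun x => ENNReal.ofReal ‖u x‖) μ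
      + essSup (fun x => ENNReal.ofReal ‖fderiv ℝ u x‖) μ ≤ ENNReal.ofReal (2 * ε) := by
  rw [two_mul, ENNReal.ofReal_add hε hε]
  refine add_le_add (essSup_le_of_ae_le _ ?_) (essSup_le_of_ae_le _ ?_)
  · filter_upwards [hu] with x hx using ENNReal.ofReal_le_ofReal hx.1
  · filter_upwards [hu] with x hx using ENNReal.ofReal_le_ofReal hx.2.2

end W1InfBound

/-- The functions approximable by elements of `S` in the `W^{1,∞}(μ)` norm. No regularity is
imposed on `S` itself, so this need not contain `S`. -/
def w1InfClosure (μ : Measure E) (S : Submodule ℝ (E → F)) : Submodule ℝ (E → F) where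
  carrier := {h | ∀ ε > 0, ∃ ψ ∈ S, W1InfBound μ (ψ - h) ε}
  zero_mem' ε hε := ⟨0, S.zero_mem, by simpa using W1InfBound.zero hε.le⟩
  add_mem' {g h} hg hh ε hε := by
    obtain ⟨ψ, hψ, hψg⟩ := hg (ε / 2) (half_pos hε)
    obtain ⟨φ, hφ, hφh⟩ := hh (ε / 2) (half_pos hε)
    refine ⟨ψ + φ, S.add_mem hψ hφ, ?_⟩
    simpa only [add_sub_add_comm, add_halves] using hψg.add hφh
  smul_mem' c h hh ε hε := by
    obtain ⟨ψ, hψ, hψh⟩ := hh (ε / (|c| + 1)) (by positivity)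
    refine ⟨c • ψ, S.smul_mem c hψ, ?_⟩
    rw [← smul_sub]
    refine (hψh.const_smul c).mono ?_
    rw [mul_div_assoc', div_le_iff₀ (by positivity), mul_comm]
    gcongr
    linarith

variable {S T : Submodule ℝ (E → F)} {g h : E → F}

lemma w1InfClosure_le_of_le_w1InfClosure (hTS : T ≤ w1InfClosure μ S) :
    w1InfClosure μ T ≤ w1InfClosure μ S := by
  intro h hh ε hε
  obtain ⟨φ, hφ, hφh⟩ := hh (ε / 2) (half_pos hε)
  obtain ⟨ψ, hψ, hψφ⟩ := hTS hφ (ε / 2) (half_pos hε)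
  refine ⟨ψ, hψ, ?_⟩
  simpa only [sub_add_sub_cancel, add_halves] using hψφ.add hφh

lemma mem_w1InfClosure_congr (hg : g ∈ w1InfClosure μ S) (hgh : ∀ᵐ x ∂μ, g =ᶠ[𝓝 x] h) :
    h ∈ w1InfClosure μ S := by
  intro ε hε
  obtain ⟨ψ, hψ, hψg⟩ := hg ε hε
  refine ⟨ψ, hψ, hψg.congr ?_⟩
  filter_upwards [hgh] with x hx using EventuallyEq.rfl.sub hx

lemma comp_clm_mem_w1InfClosure [MeasurableSpace G] {ν : Measure G} {R : Submodule ℝ (G → F)}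
    {h : G → F} (hh : h ∈ w1InfClosure ν R) {L : E →L[ℝ] G}
    (hL : Measure.QuasiMeasurePreserving L μ ν) (hRS : ∀ ψ ∈ R, ψ ∘ L ∈ S) :
    h ∘ L ∈ w1InfClosure μ S := by
  intro ε hε
  obtain ⟨ψ, hψ, hψh⟩ := hh (ε / max 1 ‖L‖) (by positivity)
  refine ⟨ψ ∘ L, hRS ψ hψ, ?_⟩
  simpa only [Pi.sub_comp, mul_div_cancel₀ ε (by positivity : max 1 ‖L‖ ≠ 0)]
    using hψh.comp_clm hL

end W1Inf

section PiecewiseLinear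

/-- The Heaviside function, in the right-continuous convention that makes it the right derivative
of `relu` everywhere. -/
def heaviside (t : ℝ) : ℝ := if 0 ≤ t then 1 else 0

lemma relu_of_nonneg {t : ℝ} (ht : 0 ≤ t) : relu t = t := max_eq_left ht

lemma relu_of_nonpos {t : ℝ} (ht : t ≤ 0) : relu t = 0 := max_eq_right ht

lemma continuous_relu : Continuous relu := continuous_id.max continuous_const

lemma hasDerivAt_relu {t : ℝ} (ht : t ≠ 0) : HasDerivAt relu (heaviside t) t := by
  rcases ht.lt_or_gt with hneg | hpos
  · rw [heaviside, if_neg hneg.not_ge]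
    refine (hasDerivAt_const t 0).congr_of_eventuallyEq ?_
    filter_upwards [Iio_mem_nhds hneg] with s hs using relu_of_nonpos (le_of_lt hs)
  · rw [heaviside, if_pos hpos.le]
    refine (hasDerivAt_id t).congr_of_eventuallyEq ?_
    filter_upwards [Ioi_mem_nhds hpos] with s hs using relu_of_nonneg (le_of_lt hs)

lemma hasDerivWithinAt_relu_Ici (t : ℝ) : HasDerivWithinAt relu (heaviside t) (Ici t) t := by
  rcases eq_or_ne t 0 with rfl | ht
  · rw [heaviside, if_pos le_rfl]
    exact (hasDerivWithinAt_id _ _).congr (fun s hs => relu_of_nonneg hs) (relu_of_nonneg le_rfl)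
  · exact (hasDerivAt_relu ht).hasDerivWithinAt

lemma hasDerivWithinAt_relu_sub_Ici (t τ : ℝ) :
    HasDerivWithinAt (fun t => relu (t - τ)) (heaviside (t - τ)) (Ici t) t := by
  have hmaps : MapsTo (fun t => t - τ) (Ici t) (Ici (t - τ)) := fun s hs => sub_le_sub_right hs τ
  simpa [Function.comp_def] using (hasDerivWithinAt_relu_Ici (t - τ)).comp t
    ((hasDerivWithinAt_id t (Ici t)).sub_const τ) hmaps

lemma add_mul_le_iff_le_floor {a t h : ℝ} (hh : 0 < h) (hat : a ≤ t) (k : ℕ) :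
    a + k * h ≤ t ↔ k ≤ ⌊(t - a) / h⌋₊ := by
  rw [Nat.le_floor_iff (div_nonneg (sub_nonneg.2 hat) hh.le), le_div_iff₀ hh, le_sub_iff_add_le']

lemma exists_sum_heaviside_eq_floor {a b h : ℝ} (hh : 0 < h) (p : ℝ → ℝ) :
    ∃ (n : ℕ) (c : ℕ → ℝ), ∀ t ∈ Icc a b,
      ∑ k ∈ Finset.range n, c k * heaviside (t - (a + k * h)) = p (a + ⌊(t - a) / h⌋₊ * h) := by
  let H : ℕ → ℝ := fun k => p (a + k * h)
  -- The coefficients are the jumps of the step function, so the sum telescopes.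
  refine ⟨⌊(b - a) / h⌋₊ + 1, fun k => if k = 0 then H 0 else H k - H (k - 1), ?_⟩
  rintro t ⟨hat, htb⟩
  have hfloor : ⌊(t - a) / h⌋₊ ≤ ⌊(b - a) / h⌋₊ := by gcongr
  have hjump (k : ℕ) : heaviside (t - (a + k * h)) = if k ≤ ⌊(t - a) / h⌋₊ then 1 else 0 := by
    simp only [heaviside, sub_nonneg, add_mul_le_iff_le_floor hh hat]
  have hfilter : (Finset.range (⌊(b - a) / h⌋₊ + 1)).filter (· ≤ ⌊(t - a) / h⌋₊)
      = Finset.range (⌊(t - a) / h⌋₊ + 1) := by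
    ext k
    simp only [Finset.mem_filter, Finset.mem_range]
    lia
  simp only [hjump, mul_ite, mul_one, mul_zero]
  rw [← Finset.sum_filter, hfilter]
  exact (Finset.eq_sum_range_sub' H _).symm

lemma exists_sum_heaviside_near {p : ℝ → ℝ} {a b ε : ℝ} (hp : ContinuousOn p (Icc a b))
    (hε : 0 < ε) : ∃ (n : ℕ) (c τ : ℕ → ℝ), (∀ k, a ≤ τ k) ∧ ∀ t ∈ Icc a b,
      |∑ k ∈ Finset.range n, c k * heaviside (t - τ k) - p t| ≤ ε := by
  obtain ⟨δ, hδ, hpδ⟩ := Metric.uniformContinuousOn_iff.1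
    (isCompact_Icc.uniformContinuousOn_of_continuous hp) ε hε
  obtain ⟨n, c, hstep⟩ := exists_sum_heaviside_eq_floor (a := a) (b := b) (half_pos hδ) p
  refine ⟨n, c, fun k => a + k * (δ / 2), fun k => le_add_of_nonneg_right (by positivity), ?_⟩
  intro t ht
  rw [hstep t ht]
  set m := ⌊(t - a) / (δ / 2)⌋₊
  have hm_le : a + m * (δ / 2) ≤ t := (add_mul_le_iff_le_floor (half_pos hδ) ht.1 m).2 le_rfl
  have hm_lt : t < a + (m + 1 : ℕ) * (δ / 2) :=
    lt_of_not_ge ((add_mul_le_iff_le_floor (half_pos hδ) ht.1 (m + 1)).not.2 (by lia))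
  push_cast at hm_lt
  have hm_mem : a + m * (δ / 2) ∈ Icc a b :=
    ⟨le_add_of_nonneg_right (by positivity), hm_le.trans ht.2⟩
  refine (hpδ _ hm_mem t ht ?_).le
  rw [Real.dist_eq, abs_lt]
  constructor <;> linarith

lemma exists_sum_relu_near {g : ℝ → ℝ} (hg : ContDiff ℝ 1 g) (a b : ℝ) {ε : ℝ} (hε : 0 < ε) :
    ∃ (n : ℕ) (c τ : ℕ → ℝ), ∀ t ∈ Icc a b,
      |g a + ∑ k ∈ Finset.range n, c k * relu (t - τ k) - g t| ≤ ε * (b - a) ∧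
      |∑ k ∈ Finset.range n, c k * heaviside (t - τ k) - deriv g t| ≤ ε := by
  obtain ⟨n, c, τ, hτ, hstep⟩ :=
    exists_sum_heaviside_near (hg.continuous_deriv_one.continuousOn (s := Icc a b)) hε
  refine ⟨n, c, τ, fun t ht => ⟨?_, hstep t ht⟩⟩
  let u : ℝ → ℝ := fun t => g a + ∑ k ∈ Finset.range n, c k * relu (t - τ k) - g t
  have hu_cont : ContinuousOn u (Icc a b) := by
    have hg_cont := hg.continuous
    have hrelu := continuous_relu
    fun_prop
  have hu_deriv (t : ℝ) : HasDerivWithinAt u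
      (∑ k ∈ Finset.range n, c k * heaviside (t - τ k) - deriv g t) (Ici t) t :=
    ((HasDerivWithinAt.fun_sum fun k _ =>
      (hasDerivWithinAt_relu_sub_Ici t (τ k)).const_mul (c k)).const_add _).sub
      (hg.differentiable_one t).hasDerivAt.hasDerivWithinAt
  have hu_a : u a = 0 := by
    simp only [u, relu_of_nonpos (sub_nonpos.2 (hτ _)), mul_zero, Finset.sum_const_zero, add_zero,
      sub_self]
  calc |u t| = ‖u t - u a‖ := by rw [hu_a, sub_zero, Real.norm_eq_abs]
    _ ≤ ε * (t - a) := norm_image_sub_le_of_norm_deriv_right_le_segment hu_cont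
        (fun s _ => hu_deriv s) (fun s hs => hstep s (Ico_subset_Icc_self hs)) t ht
    _ ≤ ε * (b - a) := by gcongr; exact ht.2

end PiecewiseLinear

section Networks

variable {E : Type*} [NormedAddCommGroup E] [InnerProductSpace ℝ E]

variable (E) in
/-- The shallow ReLU networks `∑ j, a j * relu (⟪w j, x⟫ + b j)` on `E`, of arbitrary width. -/
def reluNetworks : Submodule ℝ (E → ℝ) :=
  Submodule.span ℝ (range fun (p : E × ℝ) x => relu (⟪p.1, x⟫ + p.2))

lemma relu_inner_add_mem_reluNetworks (w : E) (b : ℝ) :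
    (fun x => relu (⟪w, x⟫ + b)) ∈ reluNetworks E :=
  Submodule.subset_span ⟨(w, b), rfl⟩

lemma const_mem_reluNetworks (c : ℝ) : (fun _ => c) ∈ reluNetworks E := by
  have hunit := (reluNetworks E).smul_mem c (relu_inner_add_mem_reluNetworks 0 1)
  simpa [relu, Pi.smul_def] using hunit

lemma exists_eq_sum_of_mem_reluNetworks {ψ : E → ℝ} (hψ : ψ ∈ reluNetworks E) :
    ∃ (N : ℕ) (a : Fin N → ℝ) (w : Fin N → E) (b : Fin N → ℝ),
      ψ = fun x => ∑ j, a j * relu (⟪w j, x⟫ + b j) := by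
  obtain ⟨N, a, neuron, rfl⟩ := Submodule.mem_span_set'.1 hψ
  choose p hp using fun j => (neuron j).2
  refine ⟨N, a, fun j => (p j).1, fun j => (p j).2, ?_⟩
  ext x
  simp only [← hp, Finset.sum_apply, Pi.smul_apply, smul_eq_mul]

lemma comp_innerSL_mem_reluNetworks {ψ : ℝ → ℝ} (hψ : ψ ∈ reluNetworks ℝ) (w : E) :
    ψ ∘ innerSL ℝ w ∈ reluNetworks E := by
  obtain ⟨N, a, v, b, rfl⟩ := exists_eq_sum_of_mem_reluNetworks hψ
  have hcomp : (fun t => ∑ j, a j * relu (⟪v j, t⟫ + b j)) ∘ innerSL ℝ w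
      = ∑ j, a j • fun x => relu (⟪v j • w, x⟫ + b j) := by
    ext x
    simp [real_inner_smul_left, mul_comm]
  rw [hcomp]
  exact Submodule.sum_mem _ fun j _ =>
    Submodule.smul_mem _ _ (relu_inner_add_mem_reluNetworks (v j • w) (b j))

lemma const_add_sum_relu_sub_mem_reluNetworks (d : ℝ) (n : ℕ) (c τ : ℕ → ℝ) :
    (fun t => d + ∑ k ∈ Finset.range n, c k * relu (t - τ k)) ∈ reluNetworks ℝ := by
  have hsum : (fun t => d + ∑ k ∈ Finset.range n, c k * relu (t - τ k))
      = (fun _ => d) + ∑ k ∈ Finset.range n, c k • fun t => relu (⟪1, t⟫ + -τ k) := by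
    ext t
    simp [sub_eq_add_neg]
  rw [hsum]
  exact add_mem (const_mem_reluNetworks d) (sum_mem fun k _ =>
    Submodule.smul_mem _ _ (relu_inner_add_mem_reluNetworks 1 (-τ k)))

lemma contDiff_one_mem_w1InfClosure_reluNetworks {g : ℝ → ℝ} (hg : ContDiff ℝ 1 g) (a b : ℝ) :
    g ∈ w1InfClosure (volume.restrict (Icc a b)) (reluNetworks ℝ) := by
  intro ε hε
  let η := ε / max 1 (b - a)
  obtain ⟨n, c, τ, hnear⟩ := exists_sum_relu_near hg a b (ε := η) (by positivity)
  have hη_le : η ≤ ε := div_le_self hε.le (le_max_left _ _)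
  have hη_mul : η * (b - a) ≤ ε := calc
    η * (b - a) ≤ η * max 1 (b - a) := by gcongr; exact le_max_right _ _
    _ = ε := div_mul_cancel₀ _ (by positivity)
  refine ⟨_, const_add_sum_relu_sub_mem_reluNetworks (g a) n c τ, ?_⟩
  have hknots : ∀ᵐ t, t ∉ range τ := (countable_range τ).ae_notMem volume
  filter_upwards [ae_restrict_of_ae hknots, ae_restrict_mem measurableSet_Icc] with t htτ ht
  have hderiv : HasDerivAt (fun t => g a + ∑ k ∈ Finset.range n, c k * relu (t - τ k) - g t)
      (∑ k ∈ Finset.range n, c k * heaviside (t - τ k) - deriv g t) t := by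
    refine ((HasDerivAt.fun_sum fun k _ => HasDerivAt.const_mul (c k) ?_).const_add _).sub
      (hg.differentiable_one t).hasDerivAt
    exact (hasDerivAt_relu (sub_ne_zero.2 fun h => htτ ⟨k, h.symm⟩)).comp_sub_const t (τ k)
  refine ⟨(hnear t ht).1.trans hη_mul, hderiv.differentiableAt, ?_⟩
  rw [← norm_deriv_eq_norm_fderiv]
  exact (congrArg norm hderiv.deriv).trans_le ((hnear t ht).2.trans hη_le)

lemma quasiMeasurePreserving_of_surjective {V W : Type*} [NormedAddCommGroup V] [NormedSpace ℝ V]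
    [FiniteDimensional ℝ V] [MeasurableSpace V] [BorelSpace V] [NormedAddCommGroup W]
    [NormedSpace ℝ W] [MeasurableSpace W] [BorelSpace W] {μ : Measure V} [μ.IsAddHaarMeasure]
    {ν : Measure W} [ν.IsAddHaarMeasure] {L : V →L[ℝ] W} (hL : Function.Surjective L) :
    Measure.QuasiMeasurePreserving L μ ν := by
  obtain ⟨c, -, hc⟩ := L.toLinearMap.exists_map_addHaar_eq_smul_addHaar μ ν hL
  refine ⟨L.measurable, ?_⟩
  rw [ContinuousLinearMap.coe_coe] at hc
  exact hc ▸ Measure.smul_absolutelyContinuous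

lemma innerSL_surjective {w : E} (hw : w ≠ 0) : Function.Surjective (innerSL ℝ w) := by
  refine LinearMap.surjective (f := (innerSL ℝ w).toLinearMap) fun h => hw ?_
  exact inner_self_eq_zero.1 (LinearMap.congr_fun h w)

lemma ridge_mem_w1InfClosure_reluNetworks [FiniteDimensional ℝ E] [MeasurableSpace E]
    [BorelSpace E] {g : ℝ → ℝ} (hg : ContDiff ℝ 1 g) (w : E) {D : Set E}
    (hD : Bornology.IsBounded D) :
    (fun x => g ⟪w, x⟫) ∈ w1InfClosure (volume.restrict D) (reluNetworks E) := by
  rcases eq_or_ne w 0 with rfl | hw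
  · intro ε hε
    refine ⟨_, const_mem_reluNetworks (g 0), ?_⟩
    simpa [Pi.sub_def] using W1InfBound.zero hε.le
  obtain ⟨R, hR⟩ := ((innerSL ℝ w).lipschitz.isBounded_image hD).subset_closedBall 0
  rw [Real.closedBall_eq_Icc] at hR
  have hquasi := (quasiMeasurePreserving_of_surjective (μ := volume) (ν := volume)
    (innerSL_surjective hw)).restrict (mapsTo_iff_image_subset.2 hR)
  exact comp_clm_mem_w1InfClosure (contDiff_one_mem_w1InfClosure_reluNetworks hg _ _) hquasi
    fun ψ hψ => comp_innerSL_mem_reluNetworks hψ w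

end Networks

section Exponentials

variable {E : Type*} [NormedAddCommGroup E] [InnerProductSpace ℝ E]

variable (E) in
/-- Linear combinations of the exponential ridge functions `x ↦ exp ⟪w, x⟫`. They form an algebra
of functions which is stable under convolution with compactly supported functions. -/
def expSpan : Submodule ℝ (E → ℝ) :=
  Submodule.span ℝ (range fun (w : E) x => Real.exp ⟪w, x⟫)

lemma exp_inner_mem_expSpan (w : E) : (fun x => Real.exp ⟪w, x⟫) ∈ expSpan E :=
  Submodule.subset_span ⟨w, rfl⟩

lemma one_mem_expSpan : (1 : E → ℝ) ∈ expSpan E := by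
  simpa [Pi.one_def] using exp_inner_mem_expSpan (0 : E)

lemma mul_mem_expSpan {S T : E → ℝ} (hS : S ∈ expSpan E) (hT : T ∈ expSpan E) :
    S * T ∈ expSpan E := by
  have hmul : expSpan E * expSpan E ≤ expSpan E := by
    rw [expSpan, Submodule.span_mul_span, Submodule.span_le]
    rintro _ ⟨_, ⟨v, rfl⟩, _, ⟨w, rfl⟩, rfl⟩
    have hexp_add : (fun x => Real.exp ⟪v, x⟫) * (fun x => Real.exp ⟪w, x⟫)
        = fun x => Real.exp ⟪v + w, x⟫ := by
      ext x
      simp only [Pi.mul_apply, inner_add_left, Real.exp_add]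
    change _ * _ ∈ expSpan E
    rw [hexp_add]
    exact exp_inner_mem_expSpan (v + w)
  exact hmul (Submodule.mul_mem_mul hS hT)

lemma continuous_of_mem_expSpan {T : E → ℝ} (hT : T ∈ expSpan E) : Continuous T := by
  induction hT using Submodule.span_induction with
  | mem T hT => obtain ⟨w, rfl⟩ := hT; fun_prop
  | zero => exact continuous_zero
  | add S T _ _ hS hT => exact hS.add hT
  | smul c T _ hT => exact hT.const_smul c

lemma exists_mem_expSpan_near {φ : E → ℝ} (hφ : Continuous φ) {K : Set E} (hK : IsCompact K)
    {ε : ℝ} (hε : 0 < ε) : ∃ T ∈ expSpan E, ∀ x ∈ K, |T x - φ x| < ε := by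
  let A : Subalgebra ℝ C(E, ℝ) :=
    ((expSpan E).toSubalgebra one_mem_expSpan fun _ _ => mul_mem_expSpan).comap
      (ContinuousMap.coeFnAlgHom ℝ)
  have hA : A.SeparatesPoints := by
    intro x y hxy
    let e : C(E, ℝ) := ⟨fun z => Real.exp ⟪x - y, z⟫, by fun_prop⟩
    refine ⟨e, ⟨e, exp_inner_mem_expSpan (x - y), rfl⟩, ?_⟩
    have hinner : ⟪x - y, x⟫ ≠ ⟪x - y, y⟫ := by
      rwa [Ne, ← sub_eq_zero, ← inner_sub_right, inner_self_eq_zero, sub_eq_zero]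
    exact Real.exp_injective.ne hinner
  obtain ⟨T, hT, hTφ⟩ :=
    ContinuousMap.exists_mem_subalgebra_near_continuous_of_isCompact_of_separatesPoints hA
      ⟨φ, hφ⟩ hK hε
  exact ⟨T, hT, hTφ⟩

end Exponentials

section Convolution

open ContinuousLinearMap (lsmul)
open scoped Convolution

section General

variable {E F F' : Type*} [NormedAddCommGroup E] [MeasurableSpace E] [BorelSpace E]
  [NormedAddCommGroup F] [NormedSpace ℝ F] [NormedAddCommGroup F'] [NormedSpace ℝ F']
  {μ : Measure E} {T φ : E → ℝ} {h : E → F}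

lemma integrable_sub_smul [IsFiniteMeasureOnCompacts μ] (hT : Continuous T) (hh : Continuous h)
    (hc : HasCompactSupport h) (x : E) : Integrable (fun y => T (x - y) • h y) μ :=
  ((hT.comp (continuous_sub_left x)).smul hh).integrable_of_hasCompactSupport hc.smul_left

lemma norm_convolution_sub_convolution_le [IsFiniteMeasureOnCompacts μ] [μ.IsAddLeftInvariant]
    [μ.IsNegInvariant] (hT : Continuous T) (hφ : Continuous φ) (hh : Continuous h)
    (hc : HasCompactSupport h) {x : E} {η : ℝ}
    (hTφ : ∀ y ∈ tsupport h, |T (x - y) - φ (x - y)| ≤ η) :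
    ‖(T ⋆[lsmul ℝ ℝ, μ] h) x - (φ ⋆[lsmul ℝ ℝ, μ] h) x‖ ≤ η * ∫ y, ‖h y‖ ∂μ := by
  rw [convolution_lsmul_swap, convolution_lsmul_swap,
    ← integral_sub (integrable_sub_smul hT hh hc x) (integrable_sub_smul hφ hh hc x),
    ← integral_const_mul]
  refine norm_integral_le_of_norm_le
    ((hh.integrable_of_hasCompactSupport hc).norm.const_mul η) (ae_of_all _ fun y => ?_)
  rw [← sub_smul, norm_smul, Real.norm_eq_abs]
  by_cases hy : y ∈ tsupport h
  · gcongr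
    exact hTφ y hy
  · simp [image_eq_zero_of_notMem_tsupport hy]

lemma convolution_prodMk [IsFiniteMeasureOnCompacts μ] [μ.IsAddLeftInvariant] [μ.IsNegInvariant]
    [CompleteSpace F] [CompleteSpace F'] (hT : Continuous T) (hh : Continuous h)
    (hc : HasCompactSupport h) {k : E → F'} (hk : Continuous k) (hkc : HasCompactSupport k)
    (x : E) :
    (T ⋆[lsmul ℝ ℝ, μ] fun y => (h y, k y)) x
      = ((T ⋆[lsmul ℝ ℝ, μ] h) x, (T ⋆[lsmul ℝ ℝ, μ] k) x) := by
  simp only [convolution_lsmul_swap, Prod.smul_mk]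
  exact integral_pair (integrable_sub_smul hT hh hc x) (integrable_sub_smul hT hk hkc x)

lemma exists_continuous_convolution_near [NormedSpace ℝ E] [FiniteDimensional ℝ E]
    [μ.IsAddHaarMeasure] [CompleteSpace F] (hh : Continuous h) (hc : HasCompactSupport h) {ε : ℝ}
    (hε : 0 < ε) : ∃ φ : E → ℝ, Continuous φ ∧ ∀ x, ‖(φ ⋆[lsmul ℝ ℝ, μ] h) x - h x‖ ≤ ε := by
  obtain ⟨δ, hδ, hhδ⟩ :=
    Metric.uniformContinuous_iff.1 (hc.uniformContinuous_of_continuous hh) ε hε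
  let φ : ContDiffBump (0 : E) := ⟨δ / 2, δ, half_pos hδ, half_lt_self hδ⟩
  refine ⟨φ.normed μ, φ.continuous_normed, fun x => ?_⟩
  rw [← dist_eq_norm]
  exact φ.dist_normed_convolution_le hh.aestronglyMeasurable fun y hy => (hhδ hy).le

end General

variable {E F : Type*} [NormedAddCommGroup E] [InnerProductSpace ℝ E] [FiniteDimensional ℝ E]
  [MeasurableSpace E] [BorelSpace E] [NormedAddCommGroup F] [NormedSpace ℝ F]

lemma convolution_mem_expSpan {T : E → ℝ} (hT : T ∈ expSpan E) {g : E → ℝ} (hg : Continuous g)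
    (hc : HasCompactSupport g) : T ⋆[lsmul ℝ ℝ, volume] g ∈ expSpan E := by
  have hexists {T : E → ℝ} (hT : T ∈ expSpan E) : ConvolutionExists T g (lsmul ℝ ℝ) volume :=
    hc.convolutionExists_right _ (continuous_of_mem_expSpan hT).locallyIntegrable hg
  induction hT using Submodule.span_induction with
  | mem T hT =>
    obtain ⟨w, rfl⟩ := hT
    convert (expSpan E).smul_mem (∫ y, Real.exp (-⟪w, y⟫) * g y) (exp_inner_mem_expSpan w) using 1
    ext x
    rw [convolution_lsmul_swap, Pi.smul_apply, smul_eq_mul, ← integral_mul_const]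
    congr with y
    simp only [inner_sub_right, Real.exp_sub, Real.exp_neg, smul_eq_mul]
    ring
  | zero => rw [zero_convolution]; exact zero_mem _
  | add S T hS hT hS' hT' =>
    rw [(hexists hS).add_distrib (hexists hT)]
    exact add_mem hS' hT'
  | smul c T _ hT' => rw [smul_convolution]; exact Submodule.smul_mem _ c hT'

lemma exists_mem_expSpan_convolution_near [CompleteSpace F] {h : E → F} (hh : Continuous h)
    (hc : HasCompactSupport h) {K : Set E} (hK : IsCompact K) {ε : ℝ} (hε : 0 < ε) :
    ∃ T ∈ expSpan E, ∀ x ∈ K, ‖(T ⋆[lsmul ℝ ℝ, volume] h) x - h x‖ ≤ ε := by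
  obtain ⟨φ, hφ, hφh⟩ := exists_continuous_convolution_near (μ := volume) hh hc (half_pos hε)
  let M := (∫ y, ‖h y‖) + 1
  have hM : 0 < M := add_pos_of_nonneg_of_pos (integral_nonneg fun _ => norm_nonneg _) one_pos
  obtain ⟨T, hT, hTφ⟩ := exists_mem_expSpan_near hφ
    ((hK.prod hc.isCompact).image continuous_sub) (div_pos (half_pos hε) hM)
  refine ⟨T, hT, fun x hx => ?_⟩
  have hdiff : ‖(T ⋆[lsmul ℝ ℝ, volume] h) x - (φ ⋆[lsmul ℝ ℝ, volume] h) x‖ ≤ ε / 2 := calc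
    _ ≤ ε / 2 / M * ∫ y, ‖h y‖ :=
      norm_convolution_sub_convolution_le (continuous_of_mem_expSpan hT) hφ hh hc
        fun y hy => (hTφ _ (mem_image_of_mem _ (mk_mem_prod hx hy))).le
    _ ≤ ε / 2 / M * M := by gcongr; exact (lt_add_one _).le
    _ = ε / 2 := div_mul_cancel₀ _ hM.ne'
  calc _ ≤ _ := norm_sub_le_norm_sub_add_norm_sub _ ((φ ⋆[lsmul ℝ ℝ, volume] h) x) _
    _ ≤ ε / 2 + ε / 2 := add_le_add hdiff (hφh x)
    _ = ε := add_halves ε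

lemma contDiff_one_mem_w1InfClosure_expSpan {g : E → ℝ} (hg : ContDiff ℝ 1 g)
    (hc : HasCompactSupport g) {K : Set E} (hK : IsCompact K) :
    g ∈ w1InfClosure (volume.restrict K) (expSpan E) := by
  intro ε hε
  have hg' : Continuous (fderiv ℝ g) := hg.continuous_fderiv one_ne_zero
  -- Mollifying the jet makes one `T` serve both `g` and its derivative.
  have hjet : HasCompactSupport fun x => (g x, fderiv ℝ g x) :=
    hc.comp₂_left (hc.fderiv ℝ) (m := Prod.mk) rfl
  obtain ⟨T, hT, hTg⟩ := exists_mem_expSpan_convolution_near (hg.continuous.prodMk hg') hjet hK hε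
  refine ⟨_, convolution_mem_expSpan hT hg.continuous hc, ?_⟩
  filter_upwards [ae_restrict_mem hK.measurableSet] with x hx
  have hT_cont := continuous_of_mem_expSpan hT
  have hnear := hTg x hx
  rw [convolution_prodMk hT_cont hg.continuous hc hg' (hc.fderiv ℝ), Prod.mk_sub_mk,
    norm_prod_le_iff] at hnear
  have hderiv : HasFDerivAt ((T ⋆[lsmul ℝ ℝ, volume] g) - g)
      ((T ⋆[lsmul ℝ ℝ, volume] fderiv ℝ g) x - fderiv ℝ g x) x :=
    (hc.hasFDerivAt_convolution_right (lsmul ℝ ℝ) hT_cont.locallyIntegrable hg x).sub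
      (hg.differentiable_one x).hasFDerivAt
  exact ⟨hnear.1, hderiv.differentiableAt, hderiv.fderiv ▸ hnear.2⟩

end Convolution

section Main

lemma exists_contDiff_hasCompactSupport_eventuallyEq {E : Type*} [NormedAddCommGroup E]
    [NormedSpace ℝ E] [FiniteDimensional ℝ E] {f : E → ℝ} {n : ℕ∞} {K W : Set E}
    (hK : IsCompact K) (hW : IsOpen W) (hKW : K ⊆ W) (hf : ContDiffOn ℝ n f W) :
    ∃ g : E → ℝ, ContDiff ℝ n g ∧ HasCompactSupport g ∧ ∀ x ∈ K, g =ᶠ[𝓝 x] f := by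
  obtain ⟨K', hK', hKK', hK'W⟩ := exists_compact_between hK hW hKW
  obtain ⟨χ, hχ_one, hχ_zero, -⟩ := exists_contMDiffMap_one_nhds_of_subset_interior
    (modelWithCornersSelf ℝ E) (n := n) hK.isClosed hKK'
  have hχ : ContDiff ℝ n χ := χ.contMDiff.contDiff
  refine ⟨fun x => χ x * f x, contDiff_iff_contDiffAt.2 fun x => ?_,
    HasCompactSupport.intro hK' fun x hx => by simp [hχ_zero x hx], fun x hx => ?_⟩
  · by_cases hx : x ∈ K'
    · exact hχ.contDiffAt.mul (hf.contDiffAt (hW.mem_nhds (hK'W hx)))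
    · refine (contDiffAt_const (c := (0 : ℝ))).congr_of_eventuallyEq ?_
      filter_upwards [hK'.isClosed.isOpen_compl.mem_nhds hx] with y hy
      simp [hχ_zero y hy]
  · filter_upwards [hχ_one.filter_mono (nhds_le_nhdsSet hx)] with y hy
    simp [hy]

variable {E : Type*} [NormedAddCommGroup E] [InnerProductSpace ℝ E] [FiniteDimensional ℝ E]
  [MeasurableSpace E] [BorelSpace E]

lemma expSpan_le_w1InfClosure_reluNetworks {D : Set E} (hD : Bornology.IsBounded D) :
    expSpan E ≤ w1InfClosure (volume.restrict D) (reluNetworks E) := by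
  rw [expSpan, Submodule.span_le]
  rintro _ ⟨w, rfl⟩
  exact ridge_mem_w1InfClosure_reluNetworks Real.contDiff_exp w hD

lemma contDiffOn_one_mem_w1InfClosure_reluNetworks {K W : Set E} (hK : IsCompact K)
    (hW : IsOpen W) (hKW : K ⊆ W) {f : E → ℝ} (hf : ContDiffOn ℝ 1 f W) :
    f ∈ w1InfClosure (volume.restrict K) (reluNetworks E) := by
  obtain ⟨g, hg, hgc, hgf⟩ := exists_contDiff_hasCompactSupport_eventuallyEq (n := 1) hK hW hKW hf
  have hg_mem : g ∈ w1InfClosure (volume.restrict K) (reluNetworks E) :=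
    w1InfClosure_le_of_le_w1InfClosure (expSpan_le_w1InfClosure_reluNetworks hK.isBounded)
      (contDiff_one_mem_w1InfClosure_expSpan hg hgc hK)
  exact mem_w1InfClosure_congr hg_mem (ae_restrict_of_forall_mem hK.measurableSet hgf)

theorem shallow_relu_W1inf_approx_general
    {D : Set E} (hD : Bornology.IsBounded D) {f : E → ℝ}
    (hf : ∃ W : Set E, IsOpen W ∧ closure D ⊆ W ∧ ContDiffOn ℝ 1 f W) {ε : ℝ} (hε : 0 < ε) :
    ∃ (N : ℕ) (a : Fin N → ℝ) (w : Fin N → E) (b : Fin N → ℝ),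
      essSup
          (fun x => ENNReal.ofReal |(∑ j, a j * relu (⟪w j, x⟫ + b j)) - f x|)
          (volume.restrict D)
        + essSup
            (fun x => ENNReal.ofReal
              ‖fderiv ℝ (fun y => (∑ j, a j * relu (⟪w j, y⟫ + b j)) - f y) x‖)
            (volume.restrict D)
      ≤ ENNReal.ofReal ε := by
  obtain ⟨W, hW, hDW, hfW⟩ := hf
  obtain ⟨ψ, hψ, hψf⟩ := contDiffOn_one_mem_w1InfClosure_reluNetworks hD.isCompact_closure hW hDW
    hfW (ε / 2) (half_pos hε)
  obtain ⟨N, a, w, b, rfl⟩ := exists_eq_sum_of_mem_reluNetworks hψ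
  have hbound : W1InfBound (volume.restrict D)
      (fun x => ∑ j, a j * relu (⟪w j, x⟫ + b j) - f x) (ε / 2) :=
    ae_restrict_of_ae_restrict_of_subset subset_closure hψf
  refine ⟨N, a, w, b, ?_⟩
  simpa only [Real.norm_eq_abs, mul_div_cancel₀ ε two_ne_zero] using
    hbound.essSup_add_essSup_le (half_pos hε).le

end Main

/-- **Lemma (shallow ReLU approximation in `W^{1,∞}`).**
Let `D ⊆ ℝ^d` be a bounded Lipschitz domain. For every `f ∈ C^1(D̄)` (i.e. `f` is `C^1`
on an open neighborhood of the closure of `D`) and every `ε > 0`, there is a shallow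
ReLU network `ψ(x) = ∑_{j=1}^N a_j σ(⟪w_j, x⟫ + b_j)` with
`‖ψ - f‖_{W^{1,∞}(D)} = ‖ψ - f‖_{L^∞(D)} + ess sup_{x∈D} |∇(ψ-f)(x)| ≤ ε`. -/
theorem shallow_relu_W1inf_approx
    (d : ℕ) (hd : 1 ≤ d)
    (Dset : Set (EuclideanSpace ℝ (Fin d)))
    (hDo : IsOpen Dset) (hDb : Bornology.IsBounded Dset) (hDne : Dset.Nonempty)
    (f : EuclideanSpace ℝ (Fin d) → ℝ)
    (hf : ∃ W : Set (EuclideanSpace ℝ (Fin d)),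
      IsOpen W ∧ closure Dset ⊆ W ∧ ContDiffOn ℝ 1 f W)
    (ε : ℝ) (hε : 0 < ε) :
    ∃ (N : ℕ) (a : Fin N → ℝ) (w : Fin N → EuclideanSpace ℝ (Fin d)) (b : Fin N → ℝ),
      essSup
          (fun x => ENNReal.ofReal |(∑ j, a j * relu (⟪w j, x⟫ + b j)) - f x|)
          (volume.restrict Dset)
        + essSup
            (fun x => ENNReal.ofReal
              ‖fderiv ℝ (fun y => (∑ j, a j * relu (⟪w j, y⟫ + b j)) - f y) x‖)
            (volume.restrict Dset)
      ≤ ENNReal.ofReal ε :=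
  shallow_relu_W1inf_approx_general hDb hf hε

end
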